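/- The bistatistic (number of rows, number of 0's) on permutation tableaux with n-k columns contained in a k×(n-k) rectangle, summed over all k, is Euler-Mahonian: D_{k,n}(p,1,1) = B_{n,k}(p), where B_{n,k}(p) = Σ_π p^{maj(π) - C(k,2)} over permutations π ∈ S_n with k-1 descents, is Carlitz' q-analog of the Eulerian numbers. -/

import Mathlib

open Finset


def wexB {n : ℕ} (π : Equiv.Perm (Fin n)) : Finset (Fin n) :=
  Finset.univ.filter (fun i => i ≤ π i)

def wex {n : ℕ} (π : Equiv.Perm (Fin n)) : ℕ := (wexB π).card

def wexbotsum {n : ℕ} (π : Equiv.Perm (Fin n)) : ℕ := ∑ i ∈ wexB π, (i.val + 1)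

def wextopsum {n : ℕ} (π : Equiv.Perm (Fin n)) : ℕ := ∑ i ∈ wexB π, ((π i).val + 1)

def wexbotsSet {n : ℕ} (π : Equiv.Perm (Fin n)) : Finset ℕ :=
  (wexB π).image (fun i => i.val + 1)

def wextopsSet {n : ℕ} (π : Equiv.Perm (Fin n)) : Finset ℕ :=
  (wexB π).image (fun i => (π i).val + 1)

/-- `A_EE`: pairs `(i,j)` with `j < i ≤ π i < π j`. -/
def AEE {n : ℕ} (π : Equiv.Perm (Fin n)) : ℕ :=
  (Finset.univ.filter (fun p : Fin n × Fin n =>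
    p.2 < p.1 ∧ p.1 ≤ π p.1 ∧ π p.1 < π p.2)).card

/-- `A_NN`: pairs `(i,j)` with `π j < π i < i < j`. -/
def ANN {n : ℕ} (π : Equiv.Perm (Fin n)) : ℕ :=
  (Finset.univ.filter (fun p : Fin n × Fin n =>
    π p.2 < π p.1 ∧ π p.1 < p.1 ∧ p.1 < p.2)).card

/-- `A_EN`: pairs `(i,j)` with `j ≤ π j < π i < i`. -/
def AEN {n : ℕ} (π : Equiv.Perm (Fin n)) : ℕ :=
  (Finset.univ.filter (fun p : Fin n × Fin n =>
    p.2 ≤ π p.2 ∧ π p.2 < π p.1 ∧ π p.1 < p.1)).card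

/-- `A_NE`: pairs `(i,j)` with `π i < i < j ≤ π j`. -/
def ANE {n : ℕ} (π : Equiv.Perm (Fin n)) : ℕ :=
  (Finset.univ.filter (fun p : Fin n × Fin n =>
    π p.1 < p.1 ∧ p.1 < p.2 ∧ p.2 ≤ π p.2)).card

/-- `C_EE`: pairs `(i,j)` with `j < i ≤ π j < π i`. -/
def CEE {n : ℕ} (π : Equiv.Perm (Fin n)) : ℕ :=
  (Finset.univ.filter (fun p : Fin n × Fin n =>
    p.2 < p.1 ∧ p.1 ≤ π p.2 ∧ π p.2 < π p.1)).card

/-- `C_NN`: pairs `(i,j)` with `π i < π j < i < j`. -/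
def CNN {n : ℕ} (π : Equiv.Perm (Fin n)) : ℕ :=
  (Finset.univ.filter (fun p : Fin n × Fin n =>
    π p.1 < π p.2 ∧ π p.2 < p.1 ∧ p.1 < p.2)).card

def descents {n : ℕ} (π : Equiv.Perm (Fin n)) : Finset (Fin n) :=
  Finset.univ.filter (fun i => ∃ h : i.val + 1 < n, π ⟨i.val + 1, h⟩ < π i)

def des {n : ℕ} (π : Equiv.Perm (Fin n)) : ℕ := (descents π).card

def destopsum {n : ℕ} (π : Equiv.Perm (Fin n)) : ℕ :=
  ∑ i ∈ descents π, ((π i).val + 1)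

def desbotsum {n : ℕ} (π : Equiv.Perm (Fin n)) : ℕ :=
  ∑ i ∈ descents π, (if h : i.val + 1 < n then (π ⟨i.val + 1, h⟩).val + 1 else 0)

def destopsSet {n : ℕ} (π : Equiv.Perm (Fin n)) : Finset ℕ :=
  (descents π).image (fun i => (π i).val + 1)

def desbotsSet {n : ℕ} (π : Equiv.Perm (Fin n)) : Finset ℕ :=
  (descents π).image
    (fun i => if h : i.val + 1 < n then (π ⟨i.val + 1, h⟩).val + 1 else 0)

def maj {n : ℕ} (π : Equiv.Perm (Fin n)) : ℕ := ∑ i ∈ descents π, (i.val + 1)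

/-- Occurrences of the generalized pattern `(2-31)`. -/
def P2d31 {n : ℕ} (π : Equiv.Perm (Fin n)) : ℕ :=
  (Finset.univ.filter (fun p : Fin n × Fin n =>
    p.1 < p.2 ∧ ∃ h : p.2.val + 1 < n,
      π ⟨p.2.val + 1, h⟩ < π p.1 ∧ π p.1 < π p.2)).card

/-- Occurrences of the generalized pattern `(31-2)`. -/
def P31d2 {n : ℕ} (π : Equiv.Perm (Fin n)) : ℕ :=
  (Finset.univ.filter (fun p : Fin n × Fin n =>
    ∃ h : p.1.val + 1 < n, π ⟨p.1.val + 1, h⟩ < π p.1 ∧ p.1.val + 1 < p.2.val ∧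
      π ⟨p.1.val + 1, h⟩ < π p.2 ∧ π p.2 < π p.1)).card

/-- Occurrences of the generalized pattern `(21-3)`. -/
def P21d3 {n : ℕ} (π : Equiv.Perm (Fin n)) : ℕ :=
  (Finset.univ.filter (fun p : Fin n × Fin n =>
    ∃ h : p.1.val + 1 < n, π ⟨p.1.val + 1, h⟩ < π p.1 ∧ p.1.val + 1 < p.2.val ∧
      π p.1 < π p.2)).card

/-- Occurrences of the generalized pattern `(3-21)`. -/
def P3d21 {n : ℕ} (π : Equiv.Perm (Fin n)) : ℕ :=
  (Finset.univ.filter (fun p : Fin n × Fin n =>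
    p.1 < p.2 ∧ ∃ h : p.2.val + 1 < n,
      π ⟨p.2.val + 1, h⟩ < π p.2 ∧ π p.2 < π p.1)).card

/-- Occurrences of the generalized pattern `(1-32)`. -/
def P1d32 {n : ℕ} (π : Equiv.Perm (Fin n)) : ℕ :=
  (Finset.univ.filter (fun p : Fin n × Fin n =>
    p.1 < p.2 ∧ ∃ h : p.2.val + 1 < n,
      π ⟨p.2.val + 1, h⟩ < π p.2 ∧ π p.1 < π ⟨p.2.val + 1, h⟩)).card

/-- Occurrences of the generalized pattern `(32-1)`. -/
def P32d1 {n : ℕ} (π : Equiv.Perm (Fin n)) : ℕ :=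
  (Finset.univ.filter (fun p : Fin n × Fin n =>
    ∃ h : p.1.val + 1 < n, π ⟨p.1.val + 1, h⟩ < π p.1 ∧ p.1.val + 1 < p.2.val ∧
      π p.2 < π ⟨p.1.val + 1, h⟩)).card


/-- A permutation tableau with `n-k` columns, encoded as a `{0,1,2}`-filling of the full
`k × m` rectangle: the `2`'s are the boxes outside the Young diagram (southeast corner). -/
def IsPermTableau {k m : ℕ} (T : Fin k → Fin m → Fin 3) : Prop :=
  (∀ j : Fin m, ∃ i : Fin k, T i j = 1) ∧
  (∀ (i : Fin k) (j : Fin m), T i j ≠ 2 →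
    ∀ (i' : Fin k) (j' : Fin m), i' ≤ i → j' ≤ j → T i' j' ≠ 2) ∧
  (∀ (i : Fin k) (j : Fin m), T i j = 0 →
    ¬ ((∃ i' < i, T i' j = 1) ∧ (∃ j' < j, T i j' = 1)))

def rowLen {k m : ℕ} (T : Fin k → Fin m → Fin 3) (i : Fin k) : ℕ :=
  (Finset.univ.filter (fun j => T i j ≠ 2)).card

def zerosT {k m : ℕ} (T : Fin k → Fin m → Fin 3) : ℕ :=
  ∑ i, (Finset.univ.filter (fun j => T i j = 0)).card

def onesT {k m : ℕ} (T : Fin k → Fin m → Fin 3) : ℕ :=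
  ∑ i, (Finset.univ.filter (fun j => T i j = 1)).card

def twosT {k m : ℕ} (T : Fin k → Fin m → Fin 3) : ℕ :=
  ∑ i, (Finset.univ.filter (fun j => T i j = 2)).card

/-- A valid `0/1`-filling of the Young diagram with row lengths `lam`. -/
def ValidFilling {k : ℕ} (lam : Fin k → ℕ) (F : ∀ i : Fin k, Fin (lam i) → Bool) : Prop :=
  (∀ (i : Fin k) (j : Fin (lam i)), ∃ (i' : Fin k) (h : (j : ℕ) < lam i'), F i' ⟨j, h⟩ = true) ∧
  (∀ (i : Fin k) (j : Fin (lam i)), F i j = false →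
    ¬ ((∃ (i' : Fin k) (h : (j : ℕ) < lam i'), i' < i ∧ F i' ⟨j, h⟩ = true) ∧
       (∃ j' : Fin (lam i), j' < j ∧ F i j' = true)))

def fillZeros {k : ℕ} {lam : Fin k → ℕ} (F : ∀ i : Fin k, Fin (lam i) → Bool) : ℕ :=
  ∑ i, (Finset.univ.filter (fun j => F i j = false)).card

def fillOnes {k : ℕ} {lam : Fin k → ℕ} (F : ∀ i : Fin k, Fin (lam i) → Bool) : ℕ :=
  ∑ i, (Finset.univ.filter (fun j => F i j = true)).card

open Classical in
/-- `F_λ(p,q)`, evaluated at integers `p`, `q`: the sum over valid fillings of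
`p ^ (#0's) * q ^ (#1's)`. -/
noncomputable def Fval {k : ℕ} (lam : Fin k → ℕ) (p q : ℤ) : ℤ :=
  ∑ F ∈ Finset.univ.filter
      (fun F : ∀ i : Fin k, Fin (lam i) → Bool => ValidFilling lam F),
    p ^ fillZeros F * q ^ fillOnes F

section TableauSide
open Classical

variable {R : Type*} [CommRing R]

def qn (p : R) (j : ℕ) : R := ∑ i ∈ Finset.range j, p ^ i

theorem qn_succ (p : R) (j : ℕ) : qn p (j+1) = 1 + p * qn p j := by
  unfold qn; rw [geom_sum_succ]; ring

theorem qn_succ' (p : R) (j : ℕ) : qn p (j+1) = qn p j + p ^ j := by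
  unfold qn; rw [Finset.sum_range_succ]

def restr {k m : ℕ} (T : Fin k → Fin m → Fin 3) (i : Fin k) : Prop :=
  ∃ j, T i j = 0 ∧ ∃ i' < i, T i' j = 1

noncomputable def wt (p : R) (j : ℕ) {k m : ℕ} (T : Fin k → Fin m → Fin 3) : R :=
  ∏ i, (p ^ (Finset.univ.filter (fun l => T i l = 0)).card *
    (if restr T i then p ^ j else qn p (j+1)))

noncomputable def HH (p : R) (k m j : ℕ) : R :=
  ∑ T : Fin k → Fin m → Fin 3, if IsPermTableau T then wt p j T else 0

/-- allowed columns -/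
def colOK (s : Prop) {k : ℕ} (r : Fin k → Prop) (c : Fin k → Fin 3) : Prop :=
  (∀ i, c i ≠ 2) ∧ (∀ i, r i → c i ≠ 1) ∧ (s ∨ ∃ i, c i = 1)

noncomputable def colWt (p : R) (j : ℕ) (s : Prop) {k : ℕ} (r : Fin k → Prop) (c : Fin k → Fin 3) : R :=
  ∏ i, ((if c i = 0 then p else 1) *
    (if r i ∨ (c i = 0 ∧ (s ∨ ∃ i' < i, c i' = 1)) then p ^ j else qn p (j+1)))

noncomputable def colSum (p : R) (j : ℕ) (s : Prop) {k : ℕ} (r : Fin k → Prop) : R :=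
  ∑ c : Fin k → Fin 3, if colOK s r c then colWt p j s r c else 0

theorem exists_lt_cons {k : ℕ} (x : Fin 3) (c : Fin k → Fin 3) (i : Fin k) :
    (∃ i' < i.succ, (Fin.cons x c : Fin (k+1) → Fin 3) i' = 1) ↔ (x = 1 ∨ ∃ i' < i, c i' = 1) := by
  constructor
  · rintro ⟨i', h, h1⟩
    induction i' using Fin.cases with
    | zero => left; simpa using h1
    | succ a => right; exact ⟨a, by simpa using h, by simpa using h1⟩
  · rintro (h | ⟨a, h, h1⟩)
    · exact ⟨0, Fin.succ_pos _, by simpa using h⟩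
    · exact ⟨a.succ, by simpa using h, by simpa using h1⟩

theorem colOK_cons {k : ℕ} (s : Prop) (r : Fin (k+1) → Prop) (x : Fin 3) (c : Fin k → Fin 3) :
    colOK s r (Fin.cons x c) ↔ x ≠ 2 ∧ (r 0 → x ≠ 1) ∧ colOK (s ∨ x = 1) (fun i => r i.succ) c := by
  simp only [colOK, Fin.forall_fin_succ, Fin.exists_fin_succ, Fin.cons_zero, Fin.cons_succ]
  tauto

theorem colWt_cons (p : R) (j : ℕ) {k : ℕ} (s : Prop) (r : Fin (k+1) → Prop) (x : Fin 3) (c : Fin k → Fin 3) :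
    colWt p j s r (Fin.cons x c) = ((if x = 0 then p else 1) *
      (if r 0 ∨ (x = 0 ∧ s) then p ^ j else qn p (j+1))) * colWt p j (s ∨ x = 1) (fun i => r i.succ) c := by
  unfold colWt
  rw [Fin.prod_univ_succ]
  congr 1
  · simp
  · refine Finset.prod_congr rfl fun i _ => ?_
    simp only [Fin.cons_succ, exists_lt_cons, or_assoc]

theorem colSum_succ (p : R) (j : ℕ) {k : ℕ} (s : Prop) (r : Fin (k+1) → Prop) :
    colSum p j s r = p * (if r 0 ∨ s then p ^ j else qn p (j+1)) * colSum p j s (fun i => r i.succ)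
      + (if r 0 then 0 else qn p (j+1) * colSum p j True (fun i => r i.succ)) := by
  unfold colSum
  rw [← (Fin.consEquiv (fun _ : Fin (k+1) => Fin 3)).sum_comp, Fintype.sum_prod_type, Fin.sum_univ_three]
  simp only [Fin.consEquiv, Equiv.coe_fn_mk, colOK_cons, colWt_cons]
  simp [Finset.mul_sum]
  by_cases h : r 0 <;> simp [h]

theorem colSum_true (p : R) (j : ℕ) {k : ℕ} (r : Fin k → Prop) :
    colSum p j True r = ∏ i, (if r i then p ^ (j+1) else qn p (j+2)) := by
  induction k with
  | zero => simp [colSum, colOK, colWt]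
  | succ k ih =>
    rw [colSum_succ, ih, Fin.prod_univ_succ]
    by_cases h : r 0
    · simp [h]; ring
    · simp [h, qn_succ' p (j+1)]; ring

theorem colSum_false (p : R) (j : ℕ) {k : ℕ} (r : Fin k → Prop) :
    colSum p j False r + qn p (j+1) * ∏ i, (p * if r i then p ^ j else qn p (j+1))
      = qn p (j+1) * ∏ i, (if r i then p ^ (j+1) else qn p (j+2)) := by
  induction k with
  | zero => simp [colSum, colOK, colWt]
  | succ k ih =>
    have := ih (fun i => r i.succ)
    rw [colSum_succ, colSum_true, Fin.prod_univ_succ, Fin.prod_univ_succ]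
    by_cases h : r 0
    · simp only [h, true_or, if_true]; linear_combination p^(j+1) * this
    · simp only [h, or_self, if_false]
      rw [qn_succ p (j+1)] at *
      linear_combination p * qn p (j+1) * this

theorem consT_iff {k m : ℕ} (c : Fin k → Fin 3) (T : Fin k → Fin m → Fin 3) (hc : ∀ i, c i ≠ 2) :
    IsPermTableau (fun i => (Fin.cons (c i) (T i) : Fin (m+1) → Fin 3)) ↔
      IsPermTableau T ∧ colOK False (restr T) c := by
  have key : ∀ (i : Fin k) (j : Fin m), (∃ j' < j.succ, (Fin.cons (c i) (T i) : Fin (m+1) → Fin 3) j' = 1)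
      ↔ (c i = 1 ∨ ∃ j' < j, T i j' = 1) := fun i j => exists_lt_cons _ _ _
  simp only [IsPermTableau, colOK, Fin.forall_fin_succ, Fin.cons_zero, Fin.cons_succ, key, false_or]
  simp only [Fin.zero_le, Fin.succ_le_succ_iff, hc, Fin.not_lt_zero, restr]
  constructor
  · rintro ⟨⟨h1, h2⟩, h3, h4⟩
    refine ⟨⟨h2, ?_, ?_⟩, ?_, ?_, h1⟩
    · intro i j hij i' j' hi hj
      exact ((h3 i).2 j hij i' ).2 j' hi hj
    · rintro i j hij ⟨ha, hb⟩
      exact (h4 i).2 j hij ⟨ha, Or.inr hb⟩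
    · exact hc
    · rintro i ⟨j, hj, hi⟩ h
      exact (h4 i).2 j hj ⟨hi, Or.inl h⟩
  · rintro ⟨⟨h2, h3, h4⟩, -, h5, h1⟩
    refine ⟨⟨h1, h2⟩, ?_, ?_⟩
    · intro i
      refine ⟨fun _ i' => ⟨fun _ _ => hc i', fun l _ h => absurd h (by simp)⟩, ?_⟩
      intro j hij i'
      exact ⟨fun _ _ => hc i', fun j' hi hj => h3 i j hij i' j' hi hj⟩
    · intro i
      refine ⟨by simp, ?_⟩
      rintro j hij ⟨ha, hb | hb⟩
      · exact h5 i ⟨j, hij, ha⟩ hb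
      · exact h4 i j hij ⟨ha, hb⟩

theorem restr_consT {k m : ℕ} (c : Fin k → Fin 3) (T : Fin k → Fin m → Fin 3) (i : Fin k) :
    restr (fun i => (Fin.cons (c i) (T i) : Fin (m+1) → Fin 3)) i ↔
      restr T i ∨ (c i = 0 ∧ (False ∨ ∃ i' < i, c i' = 1)) := by
  simp only [restr, Fin.exists_fin_succ, Fin.cons_zero, Fin.cons_succ, false_or]
  exact or_comm

theorem zeros_cons {m : ℕ} (x : Fin 3) (t : Fin m → Fin 3) :
    (Finset.univ.filter (fun l => (Fin.cons x t : Fin (m+1) → Fin 3) l = 0)).card =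
    (if x = 0 then 1 else 0) + (Finset.univ.filter (fun l => t l = 0)).card := by
  simp only [Finset.card_filter]
  rw [Fin.sum_univ_succ]
  simp

theorem wt_consT (p : R) (j : ℕ) {k m : ℕ} (c : Fin k → Fin 3) (T : Fin k → Fin m → Fin 3) :
    wt p j (fun i => (Fin.cons (c i) (T i) : Fin (m+1) → Fin 3)) =
      (∏ i, p ^ (Finset.univ.filter (fun l => T i l = 0)).card) * colWt p j False (restr T) c := by
  unfold wt colWt
  rw [← Finset.prod_mul_distrib]
  refine Finset.prod_congr rfl fun i _ => ?_
  simp only [restr_consT, zeros_cons, pow_add]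
  by_cases h : c i = 0
  · simp only [h, if_true, true_and]; ring
  · simp only [h, if_false]; ring

theorem snocT_iff {k m : ℕ} (T : Fin k → Fin m → Fin 3) :
    IsPermTableau (Fin.snoc T (fun _ => 2) : Fin (k+1) → Fin m → Fin 3) ↔ IsPermTableau T := by
  have key : ∀ (i : Fin k) (j : Fin m), (∃ i' < i.castSucc, (Fin.snoc T (fun _ => 2) : Fin (k+1) → Fin m → Fin 3) i' j = 1)
      ↔ (∃ i' < i, T i' j = 1) := by
    intro i j
    constructor
    · rintro ⟨i', h, h1⟩
      induction i' using Fin.lastCases with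
      | last => simp at h1
      | cast a => exact ⟨a, by simpa using h, by simpa using h1⟩
    · rintro ⟨a, h, h1⟩
      exact ⟨a.castSucc, by simpa using h, by simpa using h1⟩
  simp only [IsPermTableau, Fin.forall_fin_succ', Fin.exists_fin_succ', Fin.snoc_castSucc, Fin.snoc_last, key]
  simp

theorem restr_snocT {k m : ℕ} (T : Fin k → Fin m → Fin 3) (i : Fin k) :
    restr (Fin.snoc T (fun _ => 2) : Fin (k+1) → Fin m → Fin 3) i.castSucc ↔ restr T i := by
  unfold restr
  simp only [Fin.snoc_castSucc]
  refine exists_congr fun j => and_congr_right fun _ => ?_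
  constructor
  · rintro ⟨i', h, h1⟩
    induction i' using Fin.lastCases with
    | last => simp at h1
    | cast a => exact ⟨a, by simpa using h, by simpa using h1⟩
  · rintro ⟨a, h, h1⟩
    exact ⟨a.castSucc, by simpa using h, by simpa using h1⟩

theorem wt_snocT (p : R) (j : ℕ) {k m : ℕ} (T : Fin k → Fin m → Fin 3) :
    wt p j (Fin.snoc T (fun _ => 2) : Fin (k+1) → Fin m → Fin 3) = qn p (j+1) * wt p j T := by
  have h : ¬ restr (Fin.snoc T (fun _ => 2) : Fin (k+1) → Fin m → Fin 3) (Fin.last k) := by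
    rintro ⟨l, h, _⟩; simp at h
  unfold wt
  rw [Fin.prod_univ_castSucc]
  simp only [h, restr_snocT, Fin.snoc_castSucc, Fin.snoc_last]
  simp [mul_comm]

theorem HH_rec (p : R) (k m j : ℕ) :
    HH p (k+1) (m+1) j + p ^ (k+1) * qn p (j+1) * HH p (k+1) m j
      = qn p (j+1) * (HH p k (m+1) j + HH p (k+1) m (j+1)) := by
  have hA : (∑ T : Fin (k+1) → Fin (m+1) → Fin 3,
      if IsPermTableau T ∧ T (Fin.last k) 0 = 2 then wt p j T else 0) = qn p (j+1) * HH p k (m+1) j := by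
    unfold HH
    rw [Finset.mul_sum, ← (Fin.snocEquiv (fun _ : Fin (k+1) => Fin (m+1) → Fin 3)).sum_comp, Fintype.sum_prod_type]
    rw [Finset.sum_eq_single (fun _ => 2)]
    · refine Finset.sum_congr rfl fun T _ => ?_
      simp [Fin.snocEquiv, snocT_iff, wt_snocT]
    · intro b _ hb
      refine Finset.sum_eq_zero fun T _ => ?_
      rw [if_neg]
      rintro ⟨h1, h2⟩
      apply hb
      funext l
      by_contra hne
      have := h1.2.1 (Fin.last k) l (by simpa [Fin.snocEquiv] using hne) (Fin.last k) 0 le_rfl (Fin.zero_le _)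
      exact this h2
    · simp
  have hB : (∑ T : Fin (k+1) → Fin (m+1) → Fin 3,
      if IsPermTableau T ∧ ¬ T (Fin.last k) 0 = 2 then wt p j T else 0) =
      ∑ T : Fin (k+1) → Fin m → Fin 3, if IsPermTableau T then 
        (∏ i, p ^ (Finset.univ.filter (fun l => T i l = 0)).card) * colSum p j False (restr T) else 0 := by
    let e : (Fin (k+1) → Fin m → Fin 3) × (Fin (k+1) → Fin 3) ≃ (Fin (k+1) → Fin (m+1) → Fin 3) :=
      { toFun := fun x i => Fin.cons (x.2 i) (x.1 i)
        invFun := fun T => (fun i l => T i l.succ, fun i => T i 0)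
        left_inv := fun x => by simp
        right_inv := fun T => by
          funext i l
          induction l using Fin.cases <;> simp }
    rw [← e.sum_comp, Fintype.sum_prod_type]
    refine Finset.sum_congr rfl fun T _ => ?_
    have : ∀ c : Fin (k+1) → Fin 3, (if IsPermTableau (e (T, c)) ∧ ¬ e (T, c) (Fin.last k) 0 = 2
        then wt p j (e (T, c)) else 0) = if IsPermTableau T then
        (∏ i, p ^ (Finset.univ.filter (fun l => T i l = 0)).card) * 
          (if colOK False (restr T) c then colWt p j False (restr T) c else 0) else 0 := by
      intro c
      by_cases hc : ∀ i, c i ≠ 2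
      · have h1 := consT_iff c T hc
        have h2 := wt_consT p j c T
        have h3 := hc (Fin.last k)
        simp only [e, Equiv.coe_fn_mk, h1, h2, Fin.cons_zero, h3, not_false_eq_true, and_true]
        by_cases h4 : IsPermTableau T <;> by_cases h5 : colOK False (restr T) c <;> simp [h4, h5]
      · have h5 : ¬ colOK False (restr T) c := fun h => hc h.1
        rw [if_neg]
        · simp [h5]
        · rintro ⟨h1, h2⟩
          apply hc
          intro i
          have := h1.2.1 (Fin.last k) 0 h2 i 0 (Fin.le_last _) le_rfl
          simpa [e] using this
    simp only [this]
    by_cases h4 : IsPermTableau T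
    · simp only [h4, if_true, colSum, Finset.mul_sum]
    · simp [h4]
  have hC : HH p (k+1) (m+1) j = qn p (j+1) * HH p k (m+1) j +
      ∑ T : Fin (k+1) → Fin m → Fin 3, if IsPermTableau T then 
        (∏ i, p ^ (Finset.univ.filter (fun l => T i l = 0)).card) * colSum p j False (restr T) else 0 := by
    rw [← hA, ← hB, ← Finset.sum_add_distrib]
    unfold HH
    refine Finset.sum_congr rfl fun T _ => ?_
    by_cases h4 : IsPermTableau T <;> by_cases h5 : T (Fin.last k) 0 = 2 <;> simp [h4, h5]
  rw [hC, mul_add, add_assoc]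
  congr 1
  unfold HH
  rw [Finset.mul_sum, Finset.mul_sum, ← Finset.sum_add_distrib]
  refine Finset.sum_congr rfl fun T _ => ?_
  by_cases h4 : IsPermTableau T
  · simp only [h4, if_true]
    have := colSum_false p j (restr T)
    unfold wt
    rw [Finset.prod_mul_distrib] at this
    rw [Finset.prod_mul_distrib, Finset.prod_mul_distrib]
    simp only [Finset.prod_const, Finset.card_univ, Fintype.card_fin] at this
    linear_combination (∏ i, p ^ (Finset.univ.filter (fun l => T i l = 0)).card) * this
  · simp [h4]

theorem HH_zero_succ (p : R) (m j : ℕ) : HH p 0 (m+1) j = 0 := by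
  unfold HH
  refine Finset.sum_eq_zero fun T _ => ?_
  rw [if_neg]
  intro h
  obtain ⟨i, _⟩ := h.1 0
  exact i.elim0

theorem HH_zero (p : R) (k j : ℕ) : HH p k 0 j = qn p (j+1) ^ k := by
  unfold HH
  have h : ∀ T : Fin k → Fin 0 → Fin 3, IsPermTableau T := fun T => 
    ⟨fun j => j.elim0, fun i j => j.elim0, fun i j => j.elim0⟩
  have h2 : ∀ (T : Fin k → Fin 0 → Fin 3) i, ¬ restr T i := fun T i ⟨j, _⟩ => j.elim0
  simp [h, wt, h2]

theorem HH_euler (p : R) : ∀ (k m j : ℕ),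
    HH p (k+1) (m+1) j = qn p (k+1) * HH p (k+1) m j + qn p (m+j+2) * HH p k (m+1) j := by
  have hz0 : ∀ k j, HH p (k+1) 0 j = qn p (j+1) * HH p k 0 j := by
    intro k j; rw [HH_zero, HH_zero, pow_succ]; ring
  intro k
  induction k with
  | zero =>
    intro m
    induction m with
    | zero =>
      intro j
      have r0 := HH_rec p 0 0 j
      simp only [zero_add, HH_zero_succ, HH_zero, pow_one] at r0 ⊢
      rw [qn_succ p (j+1)] at r0
      simp only [qn, Finset.sum_range_one, pow_zero] at r0 ⊢
      linear_combination r0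
    | succ m ih =>
      intro j
      have r0 := HH_rec p 0 (m+1) j
      have r1 := HH_rec p 0 m j
      have c2 := ih (j+1)
      have c3 := ih j
      have q1 : qn p 1 = 1 := by simp [qn]
      simp only [zero_add, HH_zero_succ, q1, pow_one] at r0 r1 c2 c3 ⊢
      linear_combination r0 + qn p (j+1) * c2 - p * qn p (j+1) * c3 - r1
  | succ k ihk =>
    intro m
    induction m with
    | zero =>
      intro j
      have r0 := HH_rec p (k+1) 0 j
      have r2 := HH_rec p k 0 j
      have c1 := ihk 0 j
      have c2 := hz0 (k+1) (j+1)
      have c3 := hz0 (k+1) j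
      have e1 := qn_succ' p (k+1)
      have e2 := qn_succ p (j+1)
      simp only [zero_add] at *
      rw [show j + 1 + 1 = j + 2 from rfl] at *
      rw [show k + 1 + 1 = k + 2 from rfl] at *
      rw [e1]
      rw [e2] at c1 c2 ⊢
      linear_combination r0 + qn p (j+1) * c1 + qn p (j+1) * c2 - p^(k+2) * qn p (j+1) * c3 
        - (qn p (k+1) + p^(k+1)) * c3 - (1 + p * qn p (j+1)) * r2
    | succ m ihm =>
      intro j
      have r0 := HH_rec p (k+1) (m+1) j
      have r1 := HH_rec p (k+1) m j
      have r2 := HH_rec p k (m+1) j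
      have c1 := ihk (m+1) j
      have c2 := ihm (j+1)
      have c3 := ihm j
      have e1 := qn_succ' p (k+1)
      have e2 := qn_succ p (m+j+2)
      rw [show m + 1 + j + 2 = m + j + 2 + 1 by ring] at *
      rw [show m + (j + 1) + 2 = m + j + 2 + 1 by ring] at *
      rw [e1] at c2 c3 ⊢
      rw [e2] at c1 c2 ⊢
      linear_combination r0 + qn p (j+1) * c1 + qn p (j+1) * c2 - p^(k+2) * qn p (j+1) * c3 
        - (qn p (k+1) + p^(k+1)) * r1 - (1 + p * qn p (m+j+2)) * r2

end TableauSide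

section PermSide
open Classical

variable {R : Type*} [CommRing R]

/-- descent predicate on naturals -/
def DP {n : ℕ} (π : Equiv.Perm (Fin n)) (i : ℕ) : Prop :=
  ∃ h : i + 1 < n, π ⟨i + 1, h⟩ < π ⟨i, by omega⟩

def pre (D : ℕ → Prop) : ℕ → Prop
  | 0 => False
  | a+1 => D a

theorem pre_succ (D : ℕ → Prop) (a : ℕ) : pre D (a+1) = D a := rfl

theorem des_eq {n : ℕ} (π : Equiv.Perm (Fin n)) :
    des π = ∑ i ∈ Finset.range n, if DP π i then 1 else 0 := by
  unfold des descents
  rw [Finset.card_filter, ← Fin.sum_univ_eq_sum_range (fun i => if DP π i then 1 else 0)]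
  refine Finset.sum_congr rfl fun i _ => ?_
  simp [DP]

theorem maj_eq {n : ℕ} (π : Equiv.Perm (Fin n)) :
    maj π = ∑ i ∈ Finset.range n, if DP π i then i + 1 else 0 := by
  unfold maj descents
  rw [Finset.sum_filter, ← Fin.sum_univ_eq_sum_range (fun i => if DP π i then i+1 else 0)]
  refine Finset.sum_congr rfl fun i _ => ?_
  simp [DP]

noncomputable def cnt (D : ℕ → Prop) (a n : ℕ) : ℕ := ∑ i ∈ Finset.Ico a n, if D i then 1 else 0

theorem cnt_succ (D : ℕ → Prop) {a n : ℕ} (h : a ≤ n) :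
    cnt D a (n+1) = cnt D a n + if D n then 1 else 0 := by
  unfold cnt; rw [Finset.sum_Ico_succ_top h]

theorem S1_lemma (p : R) (D : ℕ → Prop) (N : ℕ) :
    1 + (∑ a ∈ Finset.range (N+1), if pre D a then p ^ (1 + cnt D a N) else 0) = qn p (cnt D 0 N + 1) := by
  induction N with
  | zero => simp [pre, cnt, qn]
  | succ N ih =>
    rw [Finset.sum_range_succ, cnt_succ D (Nat.zero_le N)]
    have : ∀ a ∈ Finset.range (N+1), (if pre D a then p ^ (1 + cnt D a (N+1)) else 0)
        = (if D N then p else 1) * (if pre D a then p ^ (1 + cnt D a N) else 0) := by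
      intro a ha
      rw [cnt_succ D (by simp at ha; omega)]
      by_cases h : D N <;> by_cases h' : pre D a <;> simp [h, h']; ring
    rw [Finset.sum_congr rfl this, ← Finset.mul_sum]
    by_cases h : D N
    · have h2 : cnt D (N+1) (N+1) = 0 := by simp [cnt]
      simp only [h, pre_succ, if_true, h2]
      rw [qn_succ p (cnt D 0 N + 1), ← ih]; ring
    · simp only [h, pre_succ, if_false]; rw [add_zero, ← ih]; ring

theorem S2_lemma (p : R) (D : ℕ → Prop) (N : ℕ) :
    (∑ a ∈ Finset.range (N+1), if pre D a then 0 else p ^ (a + 1 + cnt D a N)) + qn p (cnt D 0 N + 1)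
      = qn p (N + 2) := by
  induction N with
  | zero => simp [pre, cnt, qn, Finset.sum_range_succ, add_comm]
  | succ N ih =>
    rw [Finset.sum_range_succ, cnt_succ D (Nat.zero_le N)]
    have : ∀ a ∈ Finset.range (N+1), (if pre D a then 0 else p ^ (a + 1 + cnt D a (N+1)))
        = (if D N then p else 1) * (if pre D a then 0 else p ^ (a + 1 + cnt D a N)) := by
      intro a ha
      rw [cnt_succ D (by simp at ha; omega)]
      by_cases h : D N <;> by_cases h' : pre D a <;> simp [h, h']; ring
    rw [Finset.sum_congr rfl this, ← Finset.mul_sum]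
    by_cases h : D N
    · simp only [h, pre_succ, if_true]
      rw [qn_succ p (cnt D 0 N + 1), qn_succ p (N+2), ← ih]; ring
    · have h2 : cnt D (N+1) (N+1) = 0 := by simp [cnt]
      simp only [h, pre_succ, if_false, h2]
      rw [qn_succ' p (N+2), ← ih]; ring

theorem maj_bound (D : ℕ → Prop) (n : ℕ) :
    cnt D 0 n ≤ n ∧ (cnt D 0 n + 1).choose 2 ≤ ∑ i ∈ Finset.range n, if D i then i + 1 else 0 := by
  induction n with
  | zero => simp [cnt]
  | succ n ih =>
    rw [Finset.sum_range_succ, cnt_succ D (Nat.zero_le n)]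
    by_cases h : D n
    · simp only [h, if_true]
      refine ⟨by omega, ?_⟩
      rw [Nat.choose_succ_succ' _ 1]
      simp only [Nat.choose_one_right]
      have := ih.2
      simp only [Nat.reduceAdd]
      omega
    · simp only [h, if_false, add_zero]; exact ⟨by omega, ih.2⟩

def insPerm {n : ℕ} (a : Fin (n+1)) (π : Equiv.Perm (Fin n)) : Equiv.Perm (Fin (n+1)) :=
  (finSuccEquiv' a).trans ((Equiv.optionCongr π).trans (finSuccEquiv' (Fin.last n)).symm)

theorem insPerm_self {n : ℕ} (a : Fin (n+1)) (π : Equiv.Perm (Fin n)) :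
    insPerm a π a = Fin.last n := by
  simp [insPerm]

theorem insPerm_succAbove {n : ℕ} (a : Fin (n+1)) (π : Equiv.Perm (Fin n)) (i : Fin n) :
    insPerm a π (a.succAbove i) = (π i).castSucc := by
  simp [insPerm]

theorem insPerm_lt {n : ℕ} (a : Fin (n+1)) (π : Equiv.Perm (Fin n)) (i : ℕ) (h : i < a.val) :
    insPerm a π ⟨i, by omega⟩ = (π ⟨i, by omega⟩).castSucc := by
  rw [← insPerm_succAbove a]
  congr 1
  rw [Fin.succAbove_of_castSucc_lt _ _ (by simpa [Fin.lt_def] using h)]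
  rfl

theorem insPerm_gt {n : ℕ} (a : Fin (n+1)) (π : Equiv.Perm (Fin n)) (i : ℕ) (h : a.val ≤ i) (hi : i < n) :
    insPerm a π ⟨i+1, by omega⟩ = (π ⟨i, hi⟩).castSucc := by
  rw [← insPerm_succAbove a]
  congr 1
  rw [Fin.succAbove_of_le_castSucc _ _ (by simpa [Fin.le_def] using h)]
  rfl

theorem insPerm_bij (n : ℕ) : Function.Bijective
    (fun x : Equiv.Perm (Fin n) × Fin (n+1) => insPerm x.2 x.1) := by
  rw [Fintype.bijective_iff_injective_and_card]
  constructor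
  · rintro ⟨π, a⟩ ⟨π', a'⟩ h
    simp only at h
    have ha : a = a' := by
      apply (insPerm a π).injective
      rw [insPerm_self, h, insPerm_self]
    subst ha
    have : π = π' := by
      ext i
      have := insPerm_succAbove a π i
      rw [h, insPerm_succAbove] at this
      exact congrArg Fin.val (Fin.castSucc_injective _ this.symm)
    rw [this]
  · simp [Fintype.card_perm, Nat.factorial_succ, mul_comm]

theorem DP_ins_lt {n : ℕ} (a : Fin (n+1)) (π : Equiv.Perm (Fin n)) (i : ℕ) (h : i + 1 < a.val) :
    DP (insPerm a π) i ↔ DP π i := by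
  unfold DP
  have h1 : i + 1 < n := by omega
  have h2 : i + 1 < n + 1 := by omega
  simp only [h1, h2, exists_true_left]
  rw [insPerm_lt a π (i+1) h, insPerm_lt a π i (by omega)]
  simp

theorem DP_ins_pre {n : ℕ} (a : Fin (n+1)) (π : Equiv.Perm (Fin n)) (i : ℕ) (h : i + 1 = a.val) :
    ¬ DP (insPerm a π) i := by
  rintro ⟨h1, h2⟩
  have : (⟨i+1, h1⟩ : Fin (n+1)) = a := Fin.ext h
  rw [this, insPerm_self] at h2
  exact absurd (Fin.le_last _) (not_le.mpr h2)

theorem DP_ins_self {n : ℕ} (a : Fin (n+1)) (π : Equiv.Perm (Fin n)) :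
    DP (insPerm a π) a.val ↔ a.val < n := by
  unfold DP
  constructor
  · rintro ⟨h, _⟩; omega
  · intro h
    refine ⟨by omega, ?_⟩
    rw [insPerm_gt a π a.val le_rfl h, Fin.eta, insPerm_self]
    exact Fin.castSucc_lt_last _

theorem DP_ins_gt {n : ℕ} (a : Fin (n+1)) (π : Equiv.Perm (Fin n)) (i : ℕ) (h : a.val ≤ i) :
    DP (insPerm a π) (i+1) ↔ DP π i := by
  unfold DP
  by_cases h1 : i + 1 < n
  · have h2 : i + 1 + 1 < n + 1 := by omega
    simp only [h1, h2, exists_true_left]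
    rw [insPerm_gt a π (i+1) (by omega) h1, insPerm_gt a π i h (by omega)]
    simp
  · have h2 : ¬ i + 1 + 1 < n + 1 := by omega
    simp [h1, h2]

theorem ins_sum {n : ℕ} (a : Fin (n+1)) (π : Equiv.Perm (Fin n)) (f : ℕ → ℕ) :
    (∑ i ∈ Finset.range (n+1), if DP (insPerm a π) i then f i else 0) +
      (if pre (DP π) a.val then f (a.val - 1) else 0) =
    (∑ i ∈ Finset.range a.val, if DP π i then f i else 0) + (if a.val < n then f a.val else 0)
      + ∑ i ∈ Finset.Ico a.val n, if DP π i then f (i+1) else 0 := by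
  have h1 : Finset.range (n+1) = Finset.Ico 0 (n+1) := by simp
  rw [h1, ← Finset.sum_Ico_consecutive _ (Nat.zero_le a.val) a.isLt.le,
    Finset.sum_eq_sum_Ico_succ_bot a.isLt, ← Finset.sum_Ico_add' _ a.val n 1]
  have h2 : ∑ x ∈ Finset.Ico a.val n, (if DP (insPerm a π) (x+1) then f (x+1) else 0)
      = ∑ i ∈ Finset.Ico a.val n, if DP π i then f (i+1) else 0 := by
    refine Finset.sum_congr rfl fun i hi => ?_
    rw [Finset.mem_Ico] at hi
    simp only [DP_ins_gt a π i hi.1]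
  rw [h2]
  simp only [DP_ins_self]
  have h3 : (∑ i ∈ Finset.Ico 0 a.val, if DP (insPerm a π) i then f i else 0) +
      (if pre (DP π) a.val then f (a.val - 1) else 0)
      = ∑ i ∈ Finset.range a.val, if DP π i then f i else 0 := by
    rcases hb : a.val with _ | b
    · simp [pre]
    · rw [← Finset.range_eq_Ico, Finset.sum_range_succ, Finset.sum_range_succ]
      simp only [DP_ins_pre a π b hb.symm, if_false, pre, Nat.add_sub_cancel, add_zero]
      congr 1
      refine Finset.sum_congr rfl fun i hi => ?_
      rw [Finset.mem_range] at hi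
      simp only [DP_ins_lt a π i (by omega)]
  omega

theorem DP_top {n : ℕ} (π : Equiv.Perm (Fin n)) (i : ℕ) (h : n ≤ i + 1) : ¬ DP π i := by
  rintro ⟨h1, _⟩; omega

theorem des_cnt {n : ℕ} (π : Equiv.Perm (Fin n)) : des π = cnt (DP π) 0 n := by
  rw [des_eq, cnt]; simp

theorem des_ins {n : ℕ} (a : Fin (n+1)) (π : Equiv.Perm (Fin n)) :
    des (insPerm a π) + (if pre (DP π) a.val then 1 else 0) = des π + if a.val < n then 1 else 0 := by
  have := ins_sum a π (fun _ => 1)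
  rw [des_eq, this, des_eq]
  have h := Finset.sum_range_add_sum_Ico (fun i => if DP π i then 1 else 0) (Nat.lt_succ_iff.mp a.isLt)
  omega

theorem maj_ins {n : ℕ} (a : Fin (n+1)) (π : Equiv.Perm (Fin n)) :
    maj (insPerm a π) + (if pre (DP π) a.val then a.val else 0) =
      maj π + (if a.val < n then a.val + 1 else 0) + cnt (DP π) a.val n := by
  have h0 := ins_sum a π (fun i => i + 1)
  have h := Finset.sum_range_add_sum_Ico (fun i => if DP π i then i + 1 else 0) (Nat.lt_succ_iff.mp a.isLt)
  have h1 : (∑ i ∈ Finset.Ico a.val n, if DP π i then i + 1 + 1 else 0) =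
     (∑ i ∈ Finset.Ico a.val n, if DP π i then i + 1 else 0) + cnt (DP π) a.val n := by
    rw [cnt, ← Finset.sum_add_distrib]
    refine Finset.sum_congr rfl fun i _ => ?_
    split_ifs <;> rfl
  have h2 : (if pre (DP π) a.val then a.val - 1 + 1 else 0) = if pre (DP π) a.val then a.val else 0 := by
    rcases a.val with _ | b
    · simp [pre]
    · simp
  rw [maj_eq, maj_eq]
  simp only [h1, h2] at h0
  omega

noncomputable def AA (p : R) (n d : ℕ) : R :=
  ∑ π : Equiv.Perm (Fin n), if des π = d then p ^ maj π else 0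

theorem inner_ins_sum (p : R) (N d : ℕ) (π : Equiv.Perm (Fin (N+1))) :
    (∑ a : Fin (N+2), if des (insPerm a π) = d then p ^ maj (insPerm a π) else 0) =
      (if des π = d then qn p (d+1) * p ^ maj π else 0)
      + (if des π + 1 = d then (qn p (N+2) - qn p d) * p ^ maj π else 0) := by
  rw [Fin.sum_univ_castSucc]
  have hc : ∀ a ≤ N, cnt (DP π) a (N+1) = cnt (DP π) a N := by
    intro a ha
    rw [cnt_succ _ ha, if_neg (DP_top π N le_rfl), add_zero]
  have hl : pre (DP π) (N+1) ↔ False := by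
    simp only [pre, iff_false]; exact DP_top π N le_rfl
  have hlast : (if des (insPerm (Fin.last (N+1)) π) = d then p ^ maj (insPerm (Fin.last (N+1)) π) else 0)
      = if des π = d then p ^ maj π else 0 := by
    have h1 := des_ins (Fin.last (N+1)) π
    have h2 := maj_ins (Fin.last (N+1)) π
    have h3 : cnt (DP π) (N+1) (N+1) = 0 := by simp [cnt]
    simp only [Fin.val_last, hl, if_false, lt_irrefl, add_zero, h3] at h1 h2
    rw [h1, h2]
  have hcast : ∀ a : Fin (N+1), (if des (insPerm a.castSucc π) = d then p ^ maj (insPerm a.castSucc π) else 0)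
      = (if des π = d then p ^ maj π else 0) * (if pre (DP π) a.val then p ^ (1 + cnt (DP π) a.val N) else 0)
      + (if des π + 1 = d then p ^ maj π else 0) *
        (if pre (DP π) a.val then 0 else p ^ (a.val + 1 + cnt (DP π) a.val N)) := by
    intro a
    have h1 := des_ins a.castSucc π
    have h2 := maj_ins a.castSucc π
    simp only [Fin.val_castSucc, a.isLt, if_true, hc a.val (by omega)] at h1 h2
    by_cases hp : pre (DP π) a.val
    · simp only [hp, if_true] at h1 h2 ⊢
      have h1' : des (insPerm a.castSucc π) = des π := by omega
      have h2' : maj (insPerm a.castSucc π) = maj π + (1 + cnt (DP π) a.val N) := by omega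
      rw [h1', h2', pow_add]
      split_ifs <;> simp
    · simp only [hp, if_false] at h1 h2 ⊢
      have h1' : des (insPerm a.castSucc π) = des π + 1 := by omega
      have h2' : maj (insPerm a.castSucc π) = maj π + (a.val + 1 + cnt (DP π) a.val N) := by omega
      rw [h1', h2', pow_add]
      split_ifs <;> simp
  have hd : cnt (DP π) 0 N = des π := by rw [des_cnt, hc 0 (by omega)]
  have s1 := S1_lemma p (DP π) N
  have s2 := S2_lemma p (DP π) N
  rw [hlast, Finset.sum_congr rfl (fun a _ => hcast a), Finset.sum_add_distrib, ← Finset.mul_sum, ← Finset.mul_sum,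
    Fin.sum_univ_eq_sum_range (fun a => if pre (DP π) a then p ^ (1 + cnt (DP π) a N) else 0),
    Fin.sum_univ_eq_sum_range (fun a => if pre (DP π) a then 0 else p ^ (a + 1 + cnt (DP π) a N))]
  rw [hd] at s1 s2
  by_cases e1 : des π = d
  · have e2 : ¬ des π + 1 = d := by omega
    simp only [e1, e2, if_true, if_false]
    have e2' : ¬ d + 1 = d := by omega
    simp only [e2', if_false]
    rw [e1] at s1
    linear_combination p ^ maj π * s1
  · by_cases e2 : des π + 1 = d
    · simp only [e1, e2, if_true, if_false]
      rw [e2] at s2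
      linear_combination p ^ maj π * s2
    · simp only [e1, e2, if_false]; ring

theorem AA_rec (p : R) (N d : ℕ) :
    AA p (N+2) d = ∑ π : Equiv.Perm (Fin (N+1)), ((if des π = d then qn p (d+1) * p ^ maj π else 0)
      + (if des π + 1 = d then (qn p (N+2) - qn p d) * p ^ maj π else 0)) := by
  unfold AA
  rw [← (Equiv.ofBijective _ (insPerm_bij (N+1))).sum_comp, Fintype.sum_prod_type]
  exact Finset.sum_congr rfl fun π _ => inner_ins_sum p N d π

theorem AA_rec_zero (p : R) (N : ℕ) : AA p (N+2) 0 = AA p (N+1) 0 := by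
  rw [AA_rec]; simp [AA, qn]

theorem AA_rec_succ (p : R) (N d : ℕ) :
    AA p (N+2) (d+1) = qn p (d+2) * AA p (N+1) (d+1) + (qn p (N+2) - qn p (d+1)) * AA p (N+1) d := by
  rw [AA_rec]; simp [AA, Finset.sum_add_distrib, Finset.mul_sum]

theorem AA_top (p : R) (N : ℕ) : AA p (N+1) (N+1) = 0 := by
  unfold AA
  refine Finset.sum_eq_zero fun π _ => ?_
  rw [if_neg]
  rw [des_cnt, cnt_succ _ (Nat.zero_le N), if_neg (DP_top π N le_rfl)]
  have := (maj_bound (DP π) N).1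
  omega

theorem AA_one (p : R) : AA p 1 0 = 1 := by
  unfold AA
  have h : ∀ π : Equiv.Perm (Fin 1), des π = 0 ∧ maj π = 0 := by
    intro π
    rw [des_eq, maj_eq]
    simp [DP]
  simp [h]

theorem qn_add (p : R) (a b : ℕ) : qn p (a + b) = qn p a + p ^ a * qn p b := by
  induction b with
  | zero => simp [qn]
  | succ b ih => rw [← add_assoc, qn_succ', ih, qn_succ' p b, pow_add]; ring

theorem AA_eq_HH (p : R) : ∀ N d m : ℕ, d + m = N →
    AA p (N+1) d = p ^ ((d+1).choose 2) * HH p (d+1) m 0 := by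
  have q1 : qn p 1 = 1 := by simp [qn]
  have hz : ∀ d, HH p d 0 0 = 1 := by intro d; simp [HH_zero, q1]
  intro N
  induction N with
  | zero =>
    intro d m h
    obtain ⟨rfl, rfl⟩ : d = 0 ∧ m = 0 := by omega
    simp [AA_one, hz]
  | succ N ih =>
    intro d m h
    rcases d with _ | d
    · obtain rfl : m = N + 1 := by omega
      rw [AA_rec_zero, ih 0 N (by omega), HH_euler, HH_zero_succ]
      simp [q1]
    · have hch : (d+1+1).choose 2 = (d+1).choose 2 + (d+1) := by
        rw [Nat.choose_succ_succ' (d+1) 1]; simp; omega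
      rw [AA_rec_succ, hch]
      rcases m with _ | m
      · obtain rfl : d = N := by omega
        rw [AA_top, ih d 0 (by omega), hz, hz, qn_succ' p (d+1), pow_add]
        ring
      · rw [ih (d+1) m (by omega), ih d (m+1) (by omega), hch, HH_euler p (d+1) m,
          show N + 2 = (d+1) + (m+0+2) by omega, qn_add p (d+1), pow_add]
        ring

end PermSide

open Classical in
theorem HH_zero_eq {R : Type*} [CommRing R] (p : R) (k m : ℕ) :
    HH p k m 0 = ∑ T ∈ Finset.univ.filter
        (fun T : Fin k → Fin m → Fin 3 => IsPermTableau T), p ^ zerosT T := by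
  unfold HH
  rw [Finset.sum_filter]
  refine Finset.sum_congr rfl fun T _ => ?_
  have : wt p 0 T = p ^ zerosT T := by
    unfold wt zerosT
    rw [← Finset.prod_pow_eq_pow_sum]
    refine Finset.prod_congr rfl fun i _ => ?_
    simp [qn]
  rw [this]

open Classical in
theorem rows_zeros_euler_mahonian (n k : ℕ) (hk1 : 1 ≤ k) (hk : k ≤ n) :
    ∑ T ∈ Finset.univ.filter
        (fun T : Fin k → Fin (n - k) → Fin 3 => IsPermTableau T),
      (Polynomial.X : Polynomial ℕ) ^ zerosT T =
    ∑ π ∈ Finset.univ.filter (fun π : Equiv.Perm (Fin n) => des π = k - 1),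
      (Polynomial.X : Polynomial ℕ) ^ (maj π - k.choose 2) := by
  apply Polynomial.map_injective (Nat.castRingHom ℤ) Nat.cast_injective
  simp only [Polynomial.map_sum, Polynomial.map_pow, Polynomial.map_X]
  rw [← HH_zero_eq]
  obtain ⟨d, rfl⟩ : ∃ d, k = d + 1 := ⟨k - 1, by omega⟩
  obtain ⟨m, rfl⟩ : ∃ m, n = d + m + 1 := ⟨n - d - 1, by omega⟩
  have hm : d + m + 1 - (d + 1) = m := by omega
  rw [hm]
  have h := AA_eq_HH (Polynomial.X : Polynomial ℤ) (d+m) d m rfl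
  have hX : (Polynomial.X : Polynomial ℤ) ^ ((d+1).choose 2) ≠ 0 := pow_ne_zero _ Polynomial.X_ne_zero
  apply mul_left_cancel₀ hX
  rw [← h, Finset.mul_sum, AA, ← Finset.sum_filter, Nat.add_sub_cancel]
  refine Finset.sum_congr rfl fun π hπ => ?_
  have hd : des π = d := by simpa using hπ
  have hb := (maj_bound (DP π) (d + m + 1)).2
  rw [← des_cnt, ← maj_eq, hd] at hb
  rw [← pow_add]
  congr 1
  omega
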